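/- Let s > 3/2 and ε, μ ∈ (0,1]. There is a constant c = c(s), independent of ε, μ and T, such that for every T > 0 and every solution η of the Whitham equation ∂_t η + √T_μ(D) ∂_x η + (ε/2) ∂_x(η²) = 0 on [0,T], with t ↦ η(·,t) a C¹ curve in the Schwartz space 𝓢(ℝ), one has (d/dt) ‖η(t)‖_{H^s}^2 ≤ c ε ‖∂_x η(t)‖_{L^∞} ‖η(t)‖_{H^s}^2 for all t ∈ (0,T). -/

import Mathlib

noncomputable section

open MeasureTheory SchwartzMap
open scoped FourierTransform ENNReal

/-- The Japanese bracket `⟨x⟩ = (1 + x²)^{1/2}`. -/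
def jap (x : ℝ) : ℝ := (1 + x ^ 2) ^ ((1 : ℝ) / 2)

/-- The symbol `T_μ(ξ) = tanh(√μ |ξ|)/(√μ |ξ|)` for `ξ ≠ 0`, with value `1` at `ξ = 0`. -/
def Tsymb (μ ξ : ℝ) : ℝ :=
  if ξ = 0 then 1 else Real.tanh (Real.sqrt μ * |ξ|) / (Real.sqrt μ * |ξ|)

/-- Complexification of a real-valued function. -/
def cc (f : ℝ → ℝ) : ℝ → ℂ := fun x => (f x : ℂ)

/-- The multiplier `√T_μ(D)`, `(√T_μ(D) g)^(ξ) = T_μ(ξ)^{1/2} ĝ(ξ)`. -/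
def sqrtTmul (μ : ℝ) (g : ℝ → ℂ) : ℝ → ℂ :=
  𝓕⁻ (fun ξ : ℝ => ((Real.sqrt (Tsymb μ ξ) : ℝ) : ℂ) * 𝓕 g ξ)

/-- The `H^s`-norm `‖f‖_{H^s} = ‖⟨ξ⟩^s f̂‖_{L²}` (as an extended nonnegative real). -/
def HsNorm (s : ℝ) (f : ℝ → ℂ) : ℝ≥0∞ :=
  eLpNorm (fun ξ : ℝ => jap ξ ^ s * ‖𝓕 f ξ‖) 2 volume

/-!
The `H^s` energy is an average over steps `h ∈ ℂ` of `L²` norms of twisted `m`-th differences: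
`∫ |e^{2πi⟨h, ζ⟩} - 1|^{2m} |h|^{-2-2s} dh` is a multiple of `|ζ|^{2s}` by invariance under
rotations and scaling, and at the planar frequency `ζ = ξ + i` this is the weight `⟨ξ⟩^{2s}`.
Differences, unlike `⟨D⟩^s`, obey an exact Leibniz rule. In the difference of order `2m` of `u u'`
the top-order term is integrated by parts. In every other term one factor is bounded by `‖u'‖_∞`
and the remaining ones are differences of order at least `m`, either of `u`, or of `u` and `u'` with
an extra power of the step, which lowers the order of the average for `u'` to `s - 1 > 0`. This
gives `|⟨u, u u'⟩_{H^s}| ≤ C ‖u'‖_∞ ‖u‖²_{H^s}` without commutator theory, and the dispersive term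
is skew-adjoint.
-/

section PhaseKernel

open Module

variable {E : Type*} [NormedAddCommGroup E] [InnerProductSpace ℝ E]

/-- The Fourier symbol `e^{2πi⟨h, ζ⟩} - 1` of the difference operator with step `h`. -/
def phaseDiff (h ζ : E) : ℂ := (Real.fourierChar (inner ℝ h ζ) : ℂ) - 1

lemma norm_phaseDiff_le_two (h ζ : E) : ‖phaseDiff h ζ‖ ≤ 2 := by
  refine (norm_sub_le _ _).trans_eq ?_
  rw [Circle.norm_coe, norm_one, one_add_one_eq_two]

lemma norm_phaseDiff_le (h ζ : E) : ‖phaseDiff h ζ‖ ≤ 2 * Real.pi * (‖h‖ * ‖ζ‖) := by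
  have hexp := Real.norm_exp_I_mul_ofReal_sub_one_le (x := 2 * Real.pi * inner ℝ h ζ)
  rw [mul_comm Complex.I, ← Real.fourierChar_apply, Real.norm_eq_abs, abs_mul,
    abs_of_pos Real.two_pi_pos] at hexp
  exact hexp.trans (by gcongr; exact abs_real_inner_le_norm h ζ)

lemma phaseDiff_zero_right (h : E) : phaseDiff h 0 = 0 := by simp [phaseDiff]

lemma phaseDiff_smul_right (c : ℝ) (h ζ : E) : phaseDiff h (c • ζ) = phaseDiff (c • h) ζ := by
  rw [phaseDiff, phaseDiff, real_inner_smul_left, real_inner_smul_right]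

lemma phaseDiff_map (A : E ≃ₗᵢ[ℝ] E) (h ζ : E) : phaseDiff (A h) (A ζ) = phaseDiff h ζ := by
  rw [phaseDiff, phaseDiff, A.inner_map_map]

lemma continuous_phaseDiff : Continuous fun p : E × E => phaseDiff p.1 p.2 := by
  unfold phaseDiff
  fun_prop

/-- The density in the step `h` of the average which turns the difference symbol at frequency `ζ`
into `‖ζ‖ ^ a`; the power of `‖h‖` makes the average homogeneous of degree `a` in `ζ`. -/
def diffKernel (n : ℕ) (a : ℝ) (ζ h : E) : ℝ :=
  ‖phaseDiff h ζ‖ ^ n * ‖h‖ ^ (-(finrank ℝ E : ℝ) - a)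

lemma diffKernel_nonneg (n : ℕ) (a : ℝ) (ζ h : E) : 0 ≤ diffKernel n a ζ h := by
  unfold diffKernel; positivity

lemma diffKernel_map (n : ℕ) (a : ℝ) (A : E ≃ₗᵢ[ℝ] E) (ζ h : E) :
    diffKernel n a (A ζ) (A h) = diffKernel n a ζ h := by
  rw [diffKernel, diffKernel, phaseDiff_map, A.norm_map]

lemma diffKernel_smul (n : ℕ) (a : ℝ) {c : ℝ} (hc : 0 < c) (ζ h : E) :
    diffKernel n a (c • ζ) h = c ^ (finrank ℝ E + a) * diffKernel n a ζ (c • h) := by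
  have hcc : c ^ (finrank ℝ E + a) * c ^ (-(finrank ℝ E : ℝ) - a) = 1 := by
    rw [← Real.rpow_add hc, show (finrank ℝ E + a) + (-(finrank ℝ E : ℝ) - a) = 0 by ring,
      Real.rpow_zero]
  rw [diffKernel, diffKernel, phaseDiff_smul_right, norm_smul, Real.norm_of_nonneg hc.le,
    Real.mul_rpow hc.le (norm_nonneg h)]
  linear_combination -(‖phaseDiff (c • h) ζ‖ ^ n * ‖h‖ ^ (-(finrank ℝ E : ℝ) - a)) * hcc

lemma diffKernel_le (n : ℕ) (a : ℝ) (ζ h : E) :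
    diffKernel n a ζ h ≤
      max 2 (2 * Real.pi * ‖ζ‖) ^ n * (min 1 (‖h‖ ^ n) * ‖h‖ ^ (-(finrank ℝ E : ℝ) - a)) := by
  rw [diffKernel, ← mul_assoc]
  gcongr
  rw [mul_min_of_nonneg _ _ (by positivity), ← mul_pow, mul_one]
  refine le_min ?_ ?_ <;> gcongr
  · exact (norm_phaseDiff_le_two h ζ).trans (le_max_left _ _)
  · calc ‖phaseDiff h ζ‖ ≤ 2 * Real.pi * ‖ζ‖ * ‖h‖ := by
          linarith only [norm_phaseDiff_le h ζ]
      _ ≤ _ := by gcongr; exact le_max_right _ _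

variable [MeasurableSpace E] [BorelSpace E] [FiniteDimensional ℝ E] {n : ℕ} {a : ℝ}

lemma measurable_diffKernel (n : ℕ) (a : ℝ) :
    Measurable fun p : E × E => diffKernel n a p.1 p.2 := by
  have hphase : Measurable fun p : E × E => phaseDiff p.2 p.1 :=
    (continuous_phaseDiff.comp continuous_swap).measurable
  unfold diffKernel
  fun_prop

lemma integral_diffKernel_map (n : ℕ) (a : ℝ) (A : E ≃ₗᵢ[ℝ] E) (ζ : E) :
    ∫ h, diffKernel n a (A ζ) h = ∫ h, diffKernel n a ζ h := by
  rw [← A.measurePreserving.integral_comp A.toHomeomorph.measurableEmbedding]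
  simp only [diffKernel_map]

lemma integral_diffKernel_smul (n : ℕ) (a : ℝ) {c : ℝ} (hc : 0 < c) (ζ : E) :
    ∫ h, diffKernel n a (c • ζ) h = c ^ a * ∫ h, diffKernel n a ζ h := by
  simp only [diffKernel_smul n a hc]
  rw [integral_const_mul, Measure.integral_comp_smul_of_nonneg volume (diffKernel n a ζ) c
    (hR := hc.le), smul_eq_mul, Real.rpow_add hc, Real.rpow_natCast]
  field_simp

variable [Nontrivial E]

variable (E) in
lemma integrable_min_one_norm_pow_mul_norm_rpow (ha : 0 < a) (han : a < n) :
    Integrable fun h : E => min 1 (‖h‖ ^ n) * ‖h‖ ^ (-(finrank ℝ E : ℝ) - a) := by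
  have hd : ((finrank ℝ E - 1 : ℕ) : ℝ) = finrank ℝ E - 1 := by
    rw [Nat.cast_sub finrank_pos, Nat.cast_one]
  have hradial : Set.EqOn
      (fun y : ℝ => y ^ (finrank ℝ E - 1) • (min 1 (y ^ n) * y ^ (-(finrank ℝ E : ℝ) - a)))
      (fun y => min 1 (y ^ n) * y ^ (-1 - a)) (Set.Ioi 0) := fun y hy => by
    have hexp : -1 - a = (finrank ℝ E - 1 : ℕ) + (-(finrank ℝ E : ℝ) - a) := by rw [hd]; ring
    dsimp only
    rw [smul_eq_mul, hexp, Real.rpow_add hy, Real.rpow_natCast]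
    ring
  rw [integrable_fun_norm_addHaar volume
      (f := fun y => min 1 (y ^ n) * y ^ (-(finrank ℝ E : ℝ) - a)),
    integrableOn_congr_fun hradial measurableSet_Ioi, ← Set.Ioc_union_Ioi_eq_Ioi (zero_le_one' ℝ),
    integrableOn_union]
  constructor
  · have hrpow : IntegrableOn (fun y : ℝ => y ^ (n - 1 - a)) (Set.Ioc 0 1) :=
      (intervalIntegrable_iff_integrableOn_Ioc_of_le zero_le_one).1
        (intervalIntegral.intervalIntegrable_rpow' (by linarith))
    refine hrpow.congr_fun (fun y hy => ?_) measurableSet_Ioc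
    dsimp only
    rw [min_eq_right (pow_le_one₀ hy.1.le hy.2), ← Real.rpow_natCast, ← Real.rpow_add hy.1]
    ring_nf
  · refine (integrableOn_Ioi_rpow_of_lt (a := -1 - a) (by linarith) one_pos).congr_fun
      (fun y hy => ?_) measurableSet_Ioi
    dsimp only
    rw [min_eq_left (one_le_pow₀ (Set.mem_Ioi.1 hy).le), one_mul]

lemma integrable_diffKernel (ha : 0 < a) (han : a < n) (ζ : E) : Integrable (diffKernel n a ζ) := by
  refine ((integrable_min_one_norm_pow_mul_norm_rpow E ha han).const_mul
    (max 2 (2 * Real.pi * ‖ζ‖) ^ n)).mono'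
    ((measurable_diffKernel n a).comp measurable_prodMk_left).aestronglyMeasurable
    (.of_forall fun h => ?_)
  rw [Real.norm_of_nonneg (diffKernel_nonneg n a ζ h)]
  exact diffKernel_le n a ζ h

lemma integral_diffKernel_pos (ha : 0 < a) (han : a < n) {ζ : E} (hζ : ζ ≠ 0) :
    0 < ∫ h, diffKernel n a ζ h := by
  rw [integral_pos_iff_support_of_nonneg (diffKernel_nonneg n a ζ) (integrable_diffKernel ha han ζ)]
  have hopen : IsOpen {h : E | phaseDiff h ζ ≠ 0 ∧ h ≠ 0} :=
    (isOpen_ne_fun (continuous_phaseDiff.comp (by fun_prop : Continuous fun h : E => (h, ζ)))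
      continuous_const).inter isOpen_ne
  have hhalf : (2⁻¹ * (‖ζ‖ ^ 2)⁻¹) • ζ ∈ {h : E | phaseDiff h ζ ≠ 0 ∧ h ≠ 0} := by
    refine ⟨?_, by simp [hζ]⟩
    have harg : 2 * Real.pi * (2⁻¹ * (‖ζ‖ ^ 2)⁻¹ * ‖ζ‖ ^ 2) = Real.pi := by
      field_simp [norm_ne_zero_iff.2 hζ]
    rw [phaseDiff, real_inner_smul_left, real_inner_self_eq_norm_sq, Real.fourierChar_apply, harg,
      Complex.exp_pi_mul_I]
    norm_num
  refine (hopen.measure_pos volume ⟨_, hhalf⟩).trans_le (measure_mono fun h hh => ?_)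
  have hphase := norm_pos_iff.2 hh.1
  have hnorm := norm_pos_iff.2 hh.2
  exact (show 0 < diffKernel n a ζ h by unfold diffKernel; positivity).ne'

/-- Rotation invariance and homogeneity determine the integral up to a constant. -/
lemma exists_integral_diffKernel_eq (ha : 0 < a) (han : a < n) :
    ∃ C : ℝ, 0 < C ∧ ∀ ζ : E, ∫ h, diffKernel n a ζ h = C * ‖ζ‖ ^ a := by
  obtain ⟨e, he⟩ := exists_norm_eq E zero_le_one
  have he0 : e ≠ 0 := norm_ne_zero_iff.1 (he ▸ one_ne_zero)
  refine ⟨∫ h, diffKernel n a e h, integral_diffKernel_pos ha han he0, fun ζ => ?_⟩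
  rcases eq_or_ne ζ 0 with rfl | hζ
  · have hn : n ≠ 0 := by rintro rfl; exact (ha.trans han).ne' Nat.cast_zero
    simp [diffKernel, phaseDiff_zero_right, hn, Real.zero_rpow ha.ne']
  · have hnorm : ‖(‖ζ‖ • e)‖ = ‖ζ‖ := by rw [norm_smul, norm_norm, he, mul_one]
    calc ∫ h, diffKernel n a ζ h
        = ∫ h, diffKernel n a (Submodule.reflection (ℝ ∙ (‖ζ‖ • e - ζ))ᗮ (‖ζ‖ • e)) h := by
          rw [Submodule.reflection_sub hnorm]
      _ = (∫ h, diffKernel n a e h) * ‖ζ‖ ^ a := by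
          rw [integral_diffKernel_map, integral_diffKernel_smul n a (norm_pos_iff.2 hζ), mul_comm]

variable {α F : Type*} [MeasurableSpace α] {ν : Measure α} [SFinite ν]
  [NormedAddCommGroup F] [NormedSpace ℝ F]

lemma integrable_diffKernel_smul_prod (ha : 0 < a) (han : a < n) {freq : α → E}
    (hfreq : Measurable freq) {ψ : α → F} (hψm : AEStronglyMeasurable ψ ν)
    (hψ : Integrable (fun x => ‖freq x‖ ^ a • ψ x) ν) :
    Integrable (fun p : E × α => diffKernel n a (freq p.2) p.1 • ψ p.2) (volume.prod ν) := by
  have hkernel : Measurable fun p : E × α => diffKernel n a (freq p.2) p.1 :=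
    (measurable_diffKernel n a).comp (f := fun p : E × α => (freq p.2, p.1)) (by fun_prop)
  have hmeas : AEStronglyMeasurable
      (fun p : E × α => diffKernel n a (freq p.2) p.1 • ψ p.2) (volume.prod ν) :=
    hkernel.aestronglyMeasurable.smul hψm.comp_snd
  refine (integrable_prod_iff' hmeas).2
    ⟨.of_forall fun x => (integrable_diffKernel ha han (freq x)).smul_const (ψ x), ?_⟩
  obtain ⟨C, -, hC⟩ := exists_integral_diffKernel_eq (E := E) ha han
  refine (hψ.norm.const_mul C).congr (.of_forall fun x => ?_)
  simp only [norm_smul, Real.norm_of_nonneg (diffKernel_nonneg n a _ _), integral_mul_const, hC,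
    Real.norm_of_nonneg (Real.rpow_nonneg (norm_nonneg (freq x)) a), mul_assoc]

lemma integral_integral_diffKernel_smul [CompleteSpace F] (ha : 0 < a) (han : a < n) {C : ℝ}
    (hC : ∀ ζ : E, ∫ h, diffKernel n a ζ h = C * ‖ζ‖ ^ a) {freq : α → E}
    (hfreq : Measurable freq) {ψ : α → F} (hψm : AEStronglyMeasurable ψ ν)
    (hψ : Integrable (fun x => ‖freq x‖ ^ a • ψ x) ν) :
    ∫ h, ∫ x, diffKernel n a (freq x) h • ψ x ∂ν = C • ∫ x, ‖freq x‖ ^ a • ψ x ∂ν := by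
  rw [integral_integral_swap (integrable_diffKernel_smul_prod ha han hfreq hψm hψ)]
  simp only [integral_smul_const, hC, mul_smul, integral_smul]

end PhaseKernel
section PowerLeibniz

variable {R M N P : Type*} [CommSemiring R] [AddCommMonoid M] [AddCommMonoid N] [AddCommMonoid P]
  [Module R M] [Module R N] [Module R P]

open TensorProduct in
/-- On `M ⊗ N` the operator `D` becomes the sum `A ⊗ S + 1 ⊗ B` of two commuting operators, to
which the binomial theorem applies. -/
lemma pow_apply_bilinear_of_leibniz (b : M →ₗ[R] N →ₗ[R] P) {A : Module.End R M}
    {S B : Module.End R N} {D : Module.End R P} (hSB : Commute S B)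
    (hD : ∀ f g, D (b f g) = b (A f) (S g) + b f (B g)) (k : ℕ) (f : M) (g : N) :
    (D ^ k) (b f g) = ∑ j ∈ Finset.range (k + 1),
      k.choose j • b ((A ^ j) f) ((S ^ j) ((B ^ (k - j)) g)) := by
  set X : Module.End R (M ⊗[R] N) := map A S
  set Y : Module.End R (M ⊗[R] N) := map 1 B
  have hXY : Commute X Y := by
    rw [commute_iff_eq, ← TensorProduct.map_mul, ← TensorProduct.map_mul, hSB.eq, mul_one, one_mul]
  have hlift : D ∘ₗ lift b = lift b ∘ₗ (X + Y) := by
    ext f g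
    simp [X, Y, hD]
  have hpow := congrArg (fun L => L (f ⊗ₜ[R] g))
    (Module.End.commute_pow_left_of_commute hlift k)
  simpa [X, Y, hXY.add_pow, TensorProduct.map_pow, LinearMap.sum_apply] using hpow

end PowerLeibniz

local infixl:70 "⬝" => pairing (ContinuousLinearMap.mul ℂ ℂ)

section TwistedDifference

variable {V : Type*} [NormedAddCommGroup V] [InnerProductSpace ℝ V]

/-- The translation `f ↦ θ f(· + y)`, twisted by a phase `θ`. -/
def twistedShift (θ : Circle) (y : V) : Module.End ℂ 𝓢(V, ℂ) :=
  (θ : ℂ) • (compSubConstCLM ℂ (-y) : 𝓢(V, ℂ) →L[ℂ] 𝓢(V, ℂ)).toLinearMap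

/-- The difference operator `f ↦ θ f(· + y) - f`. -/
def twistedDiff (θ : Circle) (y : V) : Module.End ℂ 𝓢(V, ℂ) := twistedShift θ y - 1

lemma twistedShift_apply (θ : Circle) (y : V) (f : 𝓢(V, ℂ)) (x : V) :
    twistedShift θ y f x = θ * f (x + y) := by
  simp [twistedShift, compSubConstCLM_apply]

lemma twistedDiff_apply (θ : Circle) (y : V) (f : 𝓢(V, ℂ)) (x : V) :
    twistedDiff θ y f x = θ * f (x + y) - f x := by
  simp [twistedDiff, twistedShift_apply]

lemma norm_twistedShift_pow_apply_le (θ : Circle) (y : V) {f : 𝓢(V, ℂ)} {M : ℝ}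
    (hf : ∀ x, ‖f x‖ ≤ M) (j : ℕ) (x : V) : ‖(twistedShift θ y ^ j) f x‖ ≤ M := by
  induction j generalizing x with
  | zero => exact hf x
  | succ j ih =>
    rw [pow_succ', Module.End.mul_apply, twistedShift_apply, norm_mul, Circle.norm_coe, one_mul]
    exact ih _

lemma norm_twistedDiff_pow_apply_le (θ : Circle) (y : V) {f : 𝓢(V, ℂ)} {M : ℝ}
    (hf : ∀ x, ‖f x‖ ≤ M) (j : ℕ) (x : V) : ‖(twistedDiff θ y ^ j) f x‖ ≤ 2 ^ j * M := by
  induction j generalizing x with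
  | zero => simpa using hf x
  | succ j ih =>
    rw [pow_succ', Module.End.mul_apply, twistedDiff_apply]
    refine (norm_sub_le _ _).trans ?_
    rw [norm_mul, Circle.norm_coe, one_mul, pow_succ]
    linarith only [ih (x + y), ih x]

lemma twistedDiff_mul (θ : Circle) (y : V) (f g : 𝓢(V, ℂ)) :
    twistedDiff θ y (f ⬝ g) = twistedDiff 1 y f ⬝ twistedShift θ y g + f ⬝ twistedDiff θ y g := by
  ext x
  simp only [twistedDiff_apply, twistedShift_apply, pairing_apply_apply, add_apply,
    ContinuousLinearMap.mul_apply', Circle.coe_one]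
  ring

lemma twistedDiff_pow_mul (θ : Circle) (y : V) (k : ℕ) (f g : 𝓢(V, ℂ)) :
    (twistedDiff θ y ^ k) (f ⬝ g) = ∑ j ∈ Finset.range (k + 1), k.choose j •
      ((twistedDiff 1 y ^ j) f ⬝ (twistedShift θ y ^ j) ((twistedDiff θ y ^ (k - j)) g)) :=
  pow_apply_bilinear_of_leibniz
    (LinearMap.mk₂ ℂ (fun f g => pairing (ContinuousLinearMap.mul ℂ ℂ) f g)
      (by simp) (by simp) (by simp) (by simp))
    ((Commute.refl (twistedShift θ y)).sub_right (Commute.one_right _)) (twistedDiff_mul θ y) k f g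

variable [MeasurableSpace V] [BorelSpace V] [FiniteDimensional ℝ V]

lemma fourier_twistedShift (θ : Circle) (y : V) (f : 𝓢(V, ℂ)) (ξ : V) :
    𝓕 (twistedShift θ y f) ξ = θ * Real.fourierChar (inner ℝ y ξ) * 𝓕 f ξ := by
  have h := congrFun (VectorFourier.fourierIntegral_comp_add_right Real.fourierChar volume
    (innerₗ V) f y) ξ
  have hsmul : 𝓕 (twistedShift θ y f) ξ = θ * 𝓕 (fun x => f (x + y)) ξ := by
    rw [fourier_coe]
    simp only [Real.fourier_eq, twistedShift_apply, Circle.smul_def, smul_eq_mul,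
      ← integral_const_mul]
    congr with x
    ring
  rw [hsmul, mul_assoc]
  exact congrArg _ h

lemma fourier_twistedDiff (θ : Circle) (y : V) (f : 𝓢(V, ℂ)) (ξ : V) :
    𝓕 (twistedDiff θ y f) ξ = (θ * Real.fourierChar (inner ℝ y ξ) - 1) * 𝓕 f ξ := by
  have hsub : 𝓕 (twistedDiff θ y f) = 𝓕 (twistedShift θ y f) - 𝓕 f :=
    map_sub (FourierTransform.fourierCLM ℂ 𝓢(V, ℂ)) _ _
  rw [hsub, sub_apply, fourier_twistedShift, sub_one_mul]

lemma fourier_twistedDiff_pow (θ : Circle) (y : V) (j : ℕ) (f : 𝓢(V, ℂ)) (ξ : V) :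
    𝓕 ((twistedDiff θ y ^ j) f) ξ = (θ * Real.fourierChar (inner ℝ y ξ) - 1) ^ j * 𝓕 f ξ := by
  induction j with
  | zero => simp
  | succ j ih => rw [pow_succ', Module.End.mul_apply, fourier_twistedDiff, ih, pow_succ', mul_assoc]

/-- The embedding of Schwartz functions into `L²`, where the real inner product is available. -/
def toL2 : 𝓢(V, ℂ) →L[ℝ] Lp ℂ 2 (volume : Measure V) := toLpCLM ℝ ℂ 2 volume

lemma coeFn_toL2 (f : 𝓢(V, ℂ)) : toL2 f =ᵐ[volume] f := f.coeFn_toLp 2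

lemma norm_toL2_fourier (f : 𝓢(V, ℂ)) : ‖toL2 (𝓕 f)‖ = ‖toL2 f‖ := norm_fourier_toL2_eq f

lemma norm_toL2_le_of_norm_le {f g : 𝓢(V, ℂ)} {c : ℝ} (h : ∀ x, ‖f x‖ ≤ c * ‖g x‖) :
    ‖toL2 f‖ ≤ c * ‖toL2 g‖ := by
  refine Lp.norm_le_mul_norm_of_ae_le_mul ?_
  filter_upwards [coeFn_toL2 f, coeFn_toL2 g] with x hf hg
  rw [hf, hg]
  exact h x

lemma norm_toL2_le_of_norm_fourier_le {f g : 𝓢(V, ℂ)} {c : ℝ}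
    (h : ∀ ξ, ‖𝓕 f ξ‖ ≤ c * ‖𝓕 g ξ‖) : ‖toL2 f‖ ≤ c * ‖toL2 g‖ := by
  rw [← norm_toL2_fourier f, ← norm_toL2_fourier g]
  exact norm_toL2_le_of_norm_le h

lemma norm_toL2_twistedDiff_pow_add_le (θ : Circle) (y : V) (i j : ℕ) (f : 𝓢(V, ℂ)) :
    ‖toL2 ((twistedDiff θ y ^ (i + j)) f)‖ ≤ 2 ^ i * ‖toL2 ((twistedDiff θ y ^ j) f)‖ := by
  refine norm_toL2_le_of_norm_fourier_le fun ξ => ?_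
  have hsymbol : ‖(θ * Real.fourierChar (inner ℝ y ξ) - 1 : ℂ)‖ ≤ 2 := by
    refine (norm_sub_le _ _).trans_eq ?_
    rw [norm_mul, Circle.norm_coe, Circle.norm_coe, mul_one, norm_one, one_add_one_eq_two]
  rw [fourier_twistedDiff_pow, fourier_twistedDiff_pow, pow_add, mul_assoc, norm_mul, norm_pow]
  gcongr

lemma norm_toL2_twistedShift_pow_le (θ : Circle) (y : V) (j : ℕ) (f : 𝓢(V, ℂ)) :
    ‖toL2 ((twistedShift θ y ^ j) f)‖ ≤ ‖toL2 f‖ := by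
  induction j with
  | zero => rfl
  | succ j ih =>
    rw [pow_succ', Module.End.mul_apply]
    refine (norm_toL2_le_of_norm_fourier_le (g := (twistedShift θ y ^ j) f) (c := 1)
      fun ξ => ?_).trans (by rwa [one_mul])
    rw [fourier_twistedShift, norm_mul, norm_mul, Circle.norm_coe, Circle.norm_coe, one_mul]

end TwistedDifference

section RealInner

variable {V : Type*} [NormedAddCommGroup V] [InnerProductSpace ℝ V] [MeasurableSpace V]
  [BorelSpace V] [FiniteDimensional ℝ V]

lemma real_inner_toL2 (f g : 𝓢(V, ℂ)) :
    inner ℝ (toL2 f) (toL2 g) = ∫ x, inner ℝ (f x) (g x) := by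
  rw [L2.inner_def]
  refine integral_congr_ae ?_
  filter_upwards [coeFn_toL2 f, coeFn_toL2 g] with x hf hg
  rw [hf, hg]

lemma real_inner_toL2_fourier (f g : 𝓢(V, ℂ)) :
    inner ℝ (toL2 (𝓕 f)) (toL2 (𝓕 g)) = inner ℝ (toL2 f) (toL2 g) := by
  have hadd : 𝓕 (f + g) = 𝓕 f + 𝓕 g := map_add (FourierTransform.fourierCLM ℂ 𝓢(V, ℂ)) f g
  rw [real_inner_eq_norm_add_mul_self_sub_norm_mul_self_sub_norm_mul_self_div_two,
    real_inner_eq_norm_add_mul_self_sub_norm_mul_self_sub_norm_mul_self_div_two,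
    ← map_add, ← map_add, ← hadd]
  simp only [norm_toL2_fourier]

lemma norm_toL2_mul_le {f : 𝓢(V, ℂ)} {M : ℝ} (hf : ∀ x, ‖f x‖ ≤ M) (g : 𝓢(V, ℂ)) :
    ‖toL2 (f ⬝ g)‖ ≤ M * ‖toL2 g‖ := norm_toL2_le_of_norm_le fun x => by
  rw [pairing_apply_apply, ContinuousLinearMap.mul_apply', norm_mul]
  gcongr
  exact hf x

lemma abs_real_inner_toL2_mul_le {f : 𝓢(V, ℂ)} {M : ℝ} (hf : ∀ x, ‖f x‖ ≤ M) (w g : 𝓢(V, ℂ)) :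
    |inner ℝ (toL2 w) (toL2 (f ⬝ g))| ≤ M * (‖toL2 w‖ * ‖toL2 g‖) := by
  calc |inner ℝ (toL2 w) (toL2 (f ⬝ g))| ≤ ‖toL2 w‖ * ‖toL2 (f ⬝ g)‖ :=
        abs_real_inner_le_norm _ _
    _ ≤ ‖toL2 w‖ * (M * ‖toL2 g‖) := by gcongr; exact norm_toL2_mul_le hf g
    _ = M * (‖toL2 w‖ * ‖toL2 g‖) := by ring

end RealInner

section TransportEstimate

lemma derivCLM_mul (f g : 𝓢(ℝ, ℂ)) :
    derivCLM ℂ ℂ (f ⬝ g) = derivCLM ℂ ℂ f ⬝ g + f ⬝ derivCLM ℂ ℂ g := by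
  ext x
  have hcoe : ⇑(f ⬝ g) = ⇑f * ⇑g := by ext y; simp
  rw [derivCLM_apply, hcoe, deriv_mul f.differentiableAt g.differentiableAt]
  simp

lemma real_inner_toL2_derivCLM_right (f g : 𝓢(ℝ, ℂ)) :
    inner ℝ (toL2 f) (toL2 (derivCLM ℂ ℂ g)) = -inner ℝ (toL2 (derivCLM ℂ ℂ f)) (toL2 g) := by
  simp only [real_inner_toL2, derivCLM_apply]
  exact integral_bilinear_deriv_right_eq_neg_left f g (innerSL ℝ)

lemma real_inner_mul_derivCLM {u : 𝓢(ℝ, ℂ)} (hu : ∀ x, (u x).im = 0) (w : 𝓢(ℝ, ℂ)) :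
    2 * inner ℝ (toL2 w) (toL2 (u ⬝ derivCLM ℂ ℂ w)) =
      -inner ℝ (toL2 w) (toL2 (derivCLM ℂ ℂ u ⬝ w)) := by
  have hsymm : ∀ f g : 𝓢(ℝ, ℂ),
      inner ℝ (toL2 f) (toL2 (u ⬝ g)) = inner ℝ (toL2 (u ⬝ f)) (toL2 g) := fun f g => by
    simp only [real_inner_toL2]
    congr with x
    simp only [pairing_apply_apply, ContinuousLinearMap.mul_apply', Complex.inner, Complex.mul_re,
      Complex.mul_im, Complex.conj_re, Complex.conj_im, map_mul, hu]
    ring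
  have hibp := real_inner_toL2_derivCLM_right (u ⬝ w) w
  rw [derivCLM_mul, map_add, inner_add_left, ← hsymm, real_inner_comm (toL2 w),
    real_inner_comm (toL2 w) (toL2 (u ⬝ derivCLM ℂ ℂ w))] at hibp
  linarith

lemma commute_derivCLM_twistedDiff (θ : Circle) (y : ℝ) :
    Commute (derivCLM ℂ ℂ : 𝓢(ℝ, ℂ) →L[ℂ] 𝓢(ℝ, ℂ)).toLinearMap (twistedDiff θ y) := by
  refine Commute.sub_right ?_ (Commute.one_right _)
  refine LinearMap.ext fun f => SchwartzMap.ext fun x => ?_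
  have hcoe : ⇑(twistedShift θ y f) = fun x => (θ : ℂ) * f (x + y) :=
    funext (twistedShift_apply θ y f)
  simp only [Module.End.mul_apply, ContinuousLinearMap.coe_coe, derivCLM_apply,
    twistedShift_apply, hcoe]
  rw [deriv_const_mul_field, deriv_comp_add_const]

lemma derivCLM_twistedDiff_pow (θ : Circle) (y : ℝ) (j : ℕ) (f : 𝓢(ℝ, ℂ)) :
    derivCLM ℂ ℂ ((twistedDiff θ y ^ j) f) = (twistedDiff θ y ^ j) (derivCLM ℂ ℂ f) :=
  LinearMap.congr_fun ((commute_derivCLM_twistedDiff θ y).pow_right j).eq f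

variable {u : 𝓢(ℝ, ℂ)} {M : ℝ}

lemma norm_twistedDiff_one_pow_apply_le (hM : ∀ x, ‖derivCLM ℂ ℂ u x‖ ≤ M) (y : ℝ) (j : ℕ)
    (x : ℝ) : ‖(twistedDiff 1 y ^ (j + 1)) u x‖ ≤ 2 ^ j * (M * |y|) := by
  refine norm_twistedDiff_pow_apply_le 1 y (fun x => ?_) j x
  have hmvt := convex_univ.norm_image_sub_le_of_norm_deriv_le (fun x _ => u.differentiableAt)
    (fun x _ => hM x) (Set.mem_univ x) (Set.mem_univ (x + y))
  rw [add_sub_cancel_left, Real.norm_eq_abs] at hmvt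
  simpa [twistedDiff_apply] using hmvt

/-- The three energies of order `m` which control the transport term: that of `u`, that of `u'`
weighted by the step, and the untwisted one of `u`. -/
def diffEnergy (θ : Circle) (y : ℝ) (m : ℕ) (u : 𝓢(ℝ, ℂ)) : ℝ :=
  ‖toL2 ((twistedDiff θ y ^ m) u)‖ ^ 2 + y ^ 2 * ‖toL2 ((twistedDiff θ y ^ m) (derivCLM ℂ ℂ u))‖ ^ 2
    + ‖toL2 ((twistedDiff 1 y ^ m) u)‖ ^ 2

lemma norm_toL2_twistedDiff_pow_two_mul_le (θ : Circle) (y : ℝ) (m : ℕ) (u : 𝓢(ℝ, ℂ)) :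
    ‖toL2 ((twistedDiff θ y ^ (2 * m)) u)‖ ≤ 2 ^ m * ‖toL2 ((twistedDiff θ y ^ m) u)‖ := by
  rw [two_mul]
  exact norm_toL2_twistedDiff_pow_add_le θ y m m u

lemma sq_norm_toL2_le_diffEnergy (θ : Circle) (y : ℝ) (m : ℕ) (u : 𝓢(ℝ, ℂ)) :
    ‖toL2 ((twistedDiff θ y ^ m) u)‖ ^ 2 ≤ diffEnergy θ y m u := by
  unfold diffEnergy
  linarith only [sq_nonneg (y * ‖toL2 ((twistedDiff θ y ^ m) (derivCLM ℂ ℂ u))‖),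
    sq_nonneg ‖toL2 ((twistedDiff 1 y ^ m) u)‖]

lemma abs_mul_norm_mul_norm_le_diffEnergy (θ : Circle) (y : ℝ) (m : ℕ) (u : 𝓢(ℝ, ℂ)) :
    |y| * (‖toL2 ((twistedDiff θ y ^ m) u)‖ *
      ‖toL2 ((twistedDiff θ y ^ m) (derivCLM ℂ ℂ u))‖) ≤ diffEnergy θ y m u := by
  unfold diffEnergy
  rw [← sq_abs y]
  nlinarith only [sq_nonneg (‖toL2 ((twistedDiff θ y ^ m) u)‖ -
    |y| * ‖toL2 ((twistedDiff θ y ^ m) (derivCLM ℂ ℂ u))‖),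
    sq_nonneg ‖toL2 ((twistedDiff θ y ^ m) u)‖,
    sq_nonneg (|y| * ‖toL2 ((twistedDiff θ y ^ m) (derivCLM ℂ ℂ u))‖),
    sq_nonneg ‖toL2 ((twistedDiff 1 y ^ m) u)‖]

lemma norm_mul_norm_le_diffEnergy (θ : Circle) (y : ℝ) (m : ℕ) (u : 𝓢(ℝ, ℂ)) :
    ‖toL2 ((twistedDiff θ y ^ m) u)‖ * ‖toL2 ((twistedDiff 1 y ^ m) u)‖ ≤
      diffEnergy θ y m u := by
  unfold diffEnergy
  nlinarith only [sq_nonneg (‖toL2 ((twistedDiff θ y ^ m) u)‖ - ‖toL2 ((twistedDiff 1 y ^ m) u)‖),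
    sq_nonneg ‖toL2 ((twistedDiff θ y ^ m) u)‖, sq_nonneg ‖toL2 ((twistedDiff 1 y ^ m) u)‖,
    sq_nonneg (y * ‖toL2 ((twistedDiff θ y ^ m) (derivCLM ℂ ℂ u))‖)]

variable (hM : ∀ x, ‖derivCLM ℂ ℂ u x‖ ≤ M) (θ : Circle) (y : ℝ) (m : ℕ)
include hM

/-- The top-order term costs no derivative: for real `u`, integrating by parts moves it onto
the coefficient. -/
lemma abs_real_inner_mul_twistedDiff_pow_derivCLM_le (hu : ∀ x, (u x).im = 0) :
    |inner ℝ (toL2 ((twistedDiff θ y ^ (2 * m)) u))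
      (toL2 (u ⬝ (twistedDiff θ y ^ (2 * m)) (derivCLM ℂ ℂ u)))| ≤
      4 ^ m * M * diffEnergy θ y m u := by
  set w := (twistedDiff θ y ^ (2 * m)) u
  have hM0 : 0 ≤ M := (norm_nonneg _).trans (hM 0)
  have hibp := congrArg abs (real_inner_mul_derivCLM hu w)
  rw [abs_mul, abs_two, abs_neg, derivCLM_twistedDiff_pow] at hibp
  calc _ ≤ M * (‖toL2 w‖ * ‖toL2 w‖) := by
        linarith [abs_real_inner_toL2_mul_le hM w w, abs_nonneg
          (inner ℝ (toL2 w) (toL2 (u ⬝ (twistedDiff θ y ^ (2 * m)) (derivCLM ℂ ℂ u))))]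
    _ ≤ M * ((2 ^ m * ‖toL2 ((twistedDiff θ y ^ m) u)‖) *
        (2 ^ m * ‖toL2 ((twistedDiff θ y ^ m) u)‖)) := by
        gcongr <;> exact norm_toL2_twistedDiff_pow_two_mul_le θ y m u
    _ = 4 ^ m * M * ‖toL2 ((twistedDiff θ y ^ m) u)‖ ^ 2 := by
        rw [show (4 : ℝ) = 2 * 2 by norm_num, mul_pow]; ring
    _ ≤ _ := by gcongr; exact sq_norm_toL2_le_diffEnergy θ y m u

lemma abs_real_inner_twistedDiff_pow_mul_le_of_le {j : ℕ} (hj : j + 1 ≤ m) :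
    |inner ℝ (toL2 ((twistedDiff θ y ^ (2 * m)) u)) (toL2 ((twistedDiff 1 y ^ (j + 1)) u ⬝
      (twistedShift θ y ^ (j + 1)) ((twistedDiff θ y ^ (2 * m - (j + 1))) (derivCLM ℂ ℂ u))))| ≤
      4 ^ m * M * diffEnergy θ y m u := by
  have hM0 : 0 ≤ M := (norm_nonneg _).trans (hM 0)
  obtain ⟨i, rfl⟩ := Nat.exists_eq_add_of_le hj
  have hdiff := norm_toL2_twistedDiff_pow_add_le θ y i (j + 1 + i) (derivCLM ℂ ℂ u)
  rw [show i + (j + 1 + i) = 2 * (j + 1 + i) - (j + 1) by lia] at hdiff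
  refine (abs_real_inner_toL2_mul_le (norm_twistedDiff_one_pow_apply_le hM y j) _ _).trans ?_
  calc _ ≤ 2 ^ j * (M * |y|) * ((2 ^ (j + 1 + i) * ‖toL2 ((twistedDiff θ y ^ (j + 1 + i)) u)‖) *
        (2 ^ i * ‖toL2 ((twistedDiff θ y ^ (j + 1 + i)) (derivCLM ℂ ℂ u))‖)) := by
        gcongr
        · exact norm_toL2_twistedDiff_pow_two_mul_le θ y _ u
        · exact (norm_toL2_twistedShift_pow_le θ y _ _).trans hdiff
    _ = 2 ^ j * 2 ^ (j + 1 + i) * 2 ^ i * M * (|y| * (‖toL2 ((twistedDiff θ y ^ (j + 1 + i)) u)‖ *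
        ‖toL2 ((twistedDiff θ y ^ (j + 1 + i)) (derivCLM ℂ ℂ u))‖)) := by ring
    _ ≤ 4 ^ (j + 1 + i) * M * diffEnergy θ y (j + 1 + i) u := by
        gcongr
        · rw [← pow_add, ← pow_add, show (4 : ℝ) = 2 ^ 2 by norm_num, ← pow_mul]
          exact pow_le_pow_right₀ one_le_two (by lia)
        · exact abs_mul_norm_mul_norm_le_diffEnergy θ y _ u

lemma abs_real_inner_twistedDiff_pow_mul_le_of_ge {j : ℕ} (hj : m ≤ j) (hj' : j ≤ 2 * m) :
    |inner ℝ (toL2 ((twistedDiff θ y ^ (2 * m)) u)) (toL2 ((twistedDiff 1 y ^ j) u ⬝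
      (twistedShift θ y ^ j) ((twistedDiff θ y ^ (2 * m - j)) (derivCLM ℂ ℂ u))))| ≤
      4 ^ m * M * diffEnergy θ y m u := by
  have hM0 : 0 ≤ M := (norm_nonneg _).trans (hM 0)
  have hcomm : ∀ f g : 𝓢(ℝ, ℂ), f ⬝ g = g ⬝ f := fun f g => by ext x; simp [mul_comm]
  obtain ⟨i, rfl⟩ := Nat.exists_eq_add_of_le' hj
  rw [hcomm]
  refine (abs_real_inner_toL2_mul_le (norm_twistedShift_pow_apply_le θ y
    (norm_twistedDiff_pow_apply_le θ y hM _) _) _ _).trans ?_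
  calc _ ≤ 2 ^ (2 * m - (i + m)) * M * ((2 ^ m * ‖toL2 ((twistedDiff θ y ^ m) u)‖) *
        (2 ^ i * ‖toL2 ((twistedDiff 1 y ^ m) u)‖)) := by
        gcongr
        · exact norm_toL2_twistedDiff_pow_two_mul_le θ y m u
        · exact norm_toL2_twistedDiff_pow_add_le 1 y i m u
    _ = 2 ^ (2 * m - (i + m)) * 2 ^ m * 2 ^ i * M * (‖toL2 ((twistedDiff θ y ^ m) u)‖ *
        ‖toL2 ((twistedDiff 1 y ^ m) u)‖) := by ring
    _ ≤ 4 ^ m * M * diffEnergy θ y m u := by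
        gcongr
        · rw [← pow_add, ← pow_add, show (4 : ℝ) = 2 ^ 2 by norm_num, ← pow_mul]
          exact pow_le_pow_right₀ one_le_two (by lia)
        · exact norm_mul_norm_le_diffEnergy θ y m u

lemma abs_real_inner_twistedDiff_pow_transport_le (hu : ∀ x, (u x).im = 0) :
    |inner ℝ (toL2 ((twistedDiff θ y ^ (2 * m)) u))
      (toL2 ((twistedDiff θ y ^ (2 * m)) (u ⬝ derivCLM ℂ ℂ u)))| ≤
      16 ^ m * M * diffEnergy θ y m u := by
  have hterm : ∀ j ∈ Finset.range (2 * m + 1),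
      |inner ℝ (toL2 ((twistedDiff θ y ^ (2 * m)) u)) (toL2 ((twistedDiff 1 y ^ j) u ⬝
        (twistedShift θ y ^ j) ((twistedDiff θ y ^ (2 * m - j)) (derivCLM ℂ ℂ u))))| ≤
        4 ^ m * M * diffEnergy θ y m u := by
    rintro (_ | j) hj
    · exact abs_real_inner_mul_twistedDiff_pow_derivCLM_le hM θ y m hu
    rcases le_total (j + 1) m with hjm | hmj
    · exact abs_real_inner_twistedDiff_pow_mul_le_of_le hM θ y m hjm
    · exact abs_real_inner_twistedDiff_pow_mul_le_of_ge hM θ y m hmj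
        (Finset.mem_range_succ_iff.1 hj)
  rw [twistedDiff_pow_mul, map_sum, inner_sum]
  calc _ ≤ ∑ j ∈ Finset.range (2 * m + 1),
        ((2 * m).choose j : ℝ) * (4 ^ m * M * diffEnergy θ y m u) := by
        refine (Finset.abs_sum_le_sum_abs _ _).trans (Finset.sum_le_sum fun j hj => ?_)
        rw [map_nsmul, ← Nat.cast_smul_eq_nsmul ℝ, real_inner_smul_right, abs_mul, Nat.abs_cast]
        gcongr
        exact hterm j hj
    _ = 16 ^ m * M * diffEnergy θ y m u := by
        rw [← Finset.sum_mul, ← Nat.cast_sum, Nat.sum_range_choose, Nat.cast_pow, pow_mul,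
          show (16 : ℝ) = 2 ^ 2 * 4 by norm_num, mul_pow]
        push_cast
        ring

end TransportEstimate

section SobolevForm

/-- The planar frequency `ξ + iτ`, whose modulus is `|ξ|` for `τ = 0` and `⟨ξ⟩` for `τ = 1`: on it
the homogeneous kernel `diffKernel` also produces the inhomogeneous weights. -/
def planeFreq (τ ξ : ℝ) : ℂ := ξ + τ * Complex.I

lemma continuous_planeFreq (τ : ℝ) : Continuous (planeFreq τ) := by
  unfold planeFreq; fun_prop

lemma norm_planeFreq (τ ξ : ℝ) : ‖planeFreq τ ξ‖ = √(ξ ^ 2 + τ ^ 2) := Complex.norm_add_mul_I ξ τ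

lemma jap_eq_norm_planeFreq (ξ : ℝ) : jap ξ = ‖planeFreq 1 ξ‖ := by
  rw [norm_planeFreq, Real.sqrt_eq_rpow, jap, one_pow, add_comm]

lemma jap_pos (ξ : ℝ) : 0 < jap ξ := by unfold jap; positivity

lemma norm_planeFreq_le_jap {τ : ℝ} (hτ : |τ| ≤ 1) (ξ : ℝ) : ‖planeFreq τ ξ‖ ≤ jap ξ := by
  rw [jap_eq_norm_planeFreq, norm_planeFreq, norm_planeFreq, one_pow]
  gcongr
  exact (sq_le_one_iff_abs_le_one τ).2 hτ

lemma hasTemperateGrowth_jap_rpow (r : ℝ) :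
    (fun ξ => ((jap ξ ^ r : ℝ) : ℂ)).HasTemperateGrowth := by
  have hjap : (fun ξ : ℝ => jap ξ ^ r) = fun ξ => (1 + ‖ξ‖ ^ 2) ^ (r / 2) := by
    ext ξ
    rw [jap, ← Real.rpow_mul (by positivity), Real.norm_eq_abs, sq_abs]
    congr 1
    ring
  have hgrowth := Function.hasTemperateGrowth_one_add_norm_sq_rpow ℝ (r / 2)
  rw [← hjap] at hgrowth
  exact Complex.ofRealCLM.hasTemperateGrowth.comp hgrowth

/-- The Bessel potential `⟨D⟩ ^ r`. -/
def besselPotential (r : ℝ) : 𝓢(ℝ, ℂ) →L[ℂ] 𝓢(ℝ, ℂ) :=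
  fourierMultiplierCLM ℂ fun ξ => ((jap ξ ^ r : ℝ) : ℂ)

lemma fourier_besselPotential (r : ℝ) (f : 𝓢(ℝ, ℂ)) (ξ : ℝ) :
    𝓕 (besselPotential r f) ξ = jap ξ ^ r • 𝓕 f ξ := by
  rw [besselPotential, fourierMultiplierCLM_apply, FourierTransform.fourier_fourierInv_eq,
    smulLeftCLM_apply_apply (hasTemperateGrowth_jap_rpow r), Complex.coe_smul]

/-- The form `Re ⟨|D + iτ| ^ r f, |D + iτ| ^ r g⟩` of order `r`, computed on the Fourier side;
for `τ = 1` it is the real `H^r` inner product. -/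
def sobolevForm (τ r : ℝ) (f g : 𝓢(ℝ, ℂ)) : ℝ :=
  ∫ ξ, ‖planeFreq τ ξ‖ ^ (2 * r) * inner ℝ (𝓕 f ξ) (𝓕 g ξ)

lemma integrable_inner (f g : 𝓢(ℝ, ℂ)) : Integrable fun x => inner ℝ (f x) (g x) := by
  refine (L2.integrable_inner (𝕜 := ℝ) (toL2 f) (toL2 g)).congr ?_
  filter_upwards [coeFn_toL2 f, coeFn_toL2 g] with x hf hg
  rw [hf, hg]

lemma sobolevForm_one_eq_inner_left (r : ℝ) (f g : 𝓢(ℝ, ℂ)) :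
    sobolevForm 1 r f g = inner ℝ (toL2 (besselPotential (2 * r) f)) (toL2 g) := by
  rw [← real_inner_toL2_fourier, real_inner_toL2]
  simp only [sobolevForm, fourier_besselPotential, real_inner_smul_left, jap_eq_norm_planeFreq]

variable {τ r : ℝ}

lemma integrable_norm_planeFreq_rpow_mul_inner (hτ : |τ| ≤ 1) (hr : 0 ≤ r) (f g : 𝓢(ℝ, ℂ)) :
    Integrable fun ξ => ‖planeFreq τ ξ‖ ^ (2 * r) * inner ℝ (𝓕 f ξ) (𝓕 g ξ) := by
  have hweight : Measurable fun ξ => ‖planeFreq τ ξ‖ ^ (2 * r) :=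
    (continuous_planeFreq τ).norm.measurable.pow_const _
  refine (integrable_inner (𝓕 (besselPotential (2 * r) f)) (𝓕 g)).mono
    (hweight.aestronglyMeasurable.mul (integrable_inner (𝓕 f) (𝓕 g)).aestronglyMeasurable)
    (.of_forall fun ξ => ?_)
  rw [fourier_besselPotential, real_inner_smul_left, norm_mul, norm_mul,
    Real.norm_of_nonneg (Real.rpow_nonneg (jap_pos ξ).le _), Real.norm_of_nonneg (by positivity)]
  gcongr
  exact norm_planeFreq_le_jap hτ ξ

lemma sobolevForm_self_le_one (hτ : |τ| ≤ 1) (hr : 0 ≤ r) (f : 𝓢(ℝ, ℂ)) :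
    sobolevForm τ r f f ≤ sobolevForm 1 r f f := by
  refine integral_mono (integrable_norm_planeFreq_rpow_mul_inner hτ hr f f)
    (integrable_norm_planeFreq_rpow_mul_inner (abs_one.le) hr f f) fun ξ => ?_
  dsimp only
  rw [real_inner_self_eq_norm_sq, ← jap_eq_norm_planeFreq]
  gcongr
  exact norm_planeFreq_le_jap hτ ξ

lemma fourier_derivCLM (f : 𝓢(ℝ, ℂ)) (ξ : ℝ) :
    𝓕 (derivCLM ℂ ℂ f) ξ = (2 * Real.pi * ξ) • (Complex.I * 𝓕 f ξ) := by
  have hderiv := congrFun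
    (Real.fourier_deriv f.integrable f.differentiable (derivCLM ℂ ℂ f).integrable) ξ
  refine hderiv.trans ?_
  rw [Complex.real_smul, smul_eq_mul]
  push_cast
  rw [fourier_coe]
  ring

lemma sobolevForm_derivCLM_self_le (hr : 1 ≤ r) (f : 𝓢(ℝ, ℂ)) :
    sobolevForm 1 (r - 1) (derivCLM ℂ ℂ f) (derivCLM ℂ ℂ f) ≤
      (2 * Real.pi) ^ 2 * sobolevForm 1 r f f := by
  rw [sobolevForm, sobolevForm, ← integral_const_mul]
  refine integral_mono (integrable_norm_planeFreq_rpow_mul_inner abs_one.le (by linarith) _ _)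
    ((integrable_norm_planeFreq_rpow_mul_inner abs_one.le (by linarith) f f).const_mul _)
    fun ξ => ?_
  have hfreq : ξ ^ 2 ≤ jap ξ ^ (2 : ℝ) := by
    rw [jap_eq_norm_planeFreq, norm_planeFreq, Real.rpow_two, Real.sq_sqrt (by positivity)]
    linarith
  dsimp only
  rw [fourier_derivCLM, real_inner_self_eq_norm_sq, real_inner_self_eq_norm_sq, norm_smul,
    norm_mul Complex.I, Complex.norm_I, one_mul, mul_pow, Real.norm_eq_abs, sq_abs, mul_pow,
    ← jap_eq_norm_planeFreq, show 2 * r = 2 * (r - 1) + 2 by ring, Real.rpow_add (jap_pos ξ)]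
  calc jap ξ ^ (2 * (r - 1)) * ((2 * Real.pi) ^ 2 * ξ ^ 2 * ‖𝓕 f ξ‖ ^ 2)
      ≤ jap ξ ^ (2 * (r - 1)) * ((2 * Real.pi) ^ 2 * jap ξ ^ (2 : ℝ) * ‖𝓕 f ξ‖ ^ 2) := by
        gcongr
        exact Real.rpow_nonneg (jap_pos ξ).le _
    _ = _ := by ring

end SobolevForm

section Averaging

/-- The twisted difference whose Fourier symbol is the phase of `h` at the planar frequency
`ξ + iτ`: the real part of `h` is the step, and the imaginary part enters only through the twist. -/
def planeDiff (τ : ℝ) (h : ℂ) : Module.End ℂ 𝓢(ℝ, ℂ) :=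
  twistedDiff (Real.fourierChar (τ * h.im)) h.re

lemma fourier_planeDiff_pow (τ : ℝ) (h : ℂ) (k : ℕ) (f : 𝓢(ℝ, ℂ)) (ξ : ℝ) :
    𝓕 ((planeDiff τ h ^ k) f) ξ = phaseDiff h (planeFreq τ ξ) ^ k * 𝓕 f ξ := by
  have hinner : inner ℝ h (planeFreq τ ξ) = τ * h.im + inner ℝ h.re ξ := by
    simp only [planeFreq, Complex.inner, Complex.mul_re, Complex.mul_im, Complex.add_re,
      Complex.add_im, Complex.ofReal_re, Complex.ofReal_im, Complex.I_re, Complex.I_im,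
      Complex.conj_re, Complex.conj_im, RCLike.inner_apply, Real.ringHom_apply]
    ring
  rw [planeDiff, fourier_twistedDiff_pow, phaseDiff, hinner, AddChar.map_add_eq_mul,
    Circle.coe_mul]

/-- The density in the step `h` whose integral is a multiple of `sobolevForm τ r f g`. -/
def diffForm (τ r : ℝ) (k : ℕ) (f g : 𝓢(ℝ, ℂ)) (h : ℂ) : ℝ :=
  ‖h‖ ^ (-2 - 2 * r) * inner ℝ (toL2 ((planeDiff τ h ^ k) f)) (toL2 ((planeDiff τ h ^ k) g))

lemma diffForm_eq_integral (τ r : ℝ) (k : ℕ) (f g : 𝓢(ℝ, ℂ)) :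
    diffForm τ r k f g = fun h =>
      ∫ ξ, diffKernel (2 * k) (2 * r) (planeFreq τ ξ) h • inner ℝ (𝓕 f ξ) (𝓕 g ξ) := by
  have hinner : ∀ z a b : ℂ, inner ℝ (z * a) (z * b) = ‖z‖ ^ 2 * inner ℝ a b := fun z a b => by
    simp only [Complex.inner, map_mul, Complex.sq_norm, Complex.normSq_apply, Complex.mul_re,
      Complex.mul_im, Complex.conj_re, Complex.conj_im]
    ring
  ext h
  rw [diffForm, ← real_inner_toL2_fourier, real_inner_toL2, ← integral_const_mul]
  congr with ξ
  rw [fourier_planeDiff_pow, fourier_planeDiff_pow, hinner, diffKernel, norm_pow, ← pow_mul,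
    mul_comm k, Complex.finrank_real_complex, smul_eq_mul]
  push_cast
  ring

variable {τ r : ℝ} {k : ℕ}

lemma integrable_diffForm (hτ : |τ| ≤ 1) (hr : 0 < r) (hrk : r < k) (f g : 𝓢(ℝ, ℂ)) :
    Integrable (diffForm τ r k f g) := by
  rw [diffForm_eq_integral]
  exact (integrable_diffKernel_smul_prod (by linarith) (by push_cast; linarith)
    (continuous_planeFreq τ).measurable (integrable_inner (𝓕 f) (𝓕 g)).aestronglyMeasurable
    (integrable_norm_planeFreq_rpow_mul_inner hτ hr.le f g)).integral_prod_left

lemma exists_integral_diffForm_eq (hr : 0 < r) (hrk : r < k) :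
    ∃ C : ℝ, 0 < C ∧ ∀ τ : ℝ, |τ| ≤ 1 → ∀ f g : 𝓢(ℝ, ℂ),
      ∫ h, diffForm τ r k f g h = C * sobolevForm τ r f g := by
  have hrk' : 2 * r < (2 * k : ℕ) := by push_cast; linarith
  obtain ⟨C, hC0, hC⟩ := exists_integral_diffKernel_eq (E := ℂ) (by linarith : 0 < 2 * r) hrk'
  refine ⟨C, hC0, fun τ hτ f g => ?_⟩
  simp only [diffForm_eq_integral]
  exact integral_integral_diffKernel_smul (by linarith) hrk' hC
    (continuous_planeFreq τ).measurable (integrable_inner (𝓕 f) (𝓕 g)).aestronglyMeasurable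
    (integrable_norm_planeFreq_rpow_mul_inner hτ hr.le f g)

lemma sq_re_mul_norm_rpow_le (h : ℂ) (r : ℝ) :
    h.re ^ 2 * ‖h‖ ^ (-2 - 2 * r) ≤ ‖h‖ ^ (-2 - 2 * (r - 1)) := by
  rcases eq_or_ne h 0 with rfl | hh
  · rw [Complex.zero_re, zero_pow two_ne_zero, zero_mul]
    positivity
  calc h.re ^ 2 * ‖h‖ ^ (-2 - 2 * r) ≤ ‖h‖ ^ (2 : ℝ) * ‖h‖ ^ (-2 - 2 * r) := by
        rw [Real.rpow_two, ← sq_abs h.re]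
        gcongr
        exact Complex.abs_re_le_norm h
    _ = ‖h‖ ^ (-2 - 2 * (r - 1)) := by
        rw [← Real.rpow_add (norm_pos_iff.2 hh)]
        ring_nf

lemma norm_rpow_mul_diffEnergy_le (s : ℝ) (m : ℕ) (u : 𝓢(ℝ, ℂ)) (h : ℂ) :
    ‖h‖ ^ (-2 - 2 * s) * diffEnergy (Real.fourierChar (1 * h.im)) h.re m u ≤
      diffForm 1 s m u u h + diffForm 1 (s - 1) m (derivCLM ℂ ℂ u) (derivCLM ℂ ℂ u) h +
        diffForm 0 s m u u h := by
  have hone : twistedDiff (Real.fourierChar (1 * h.im)) h.re = planeDiff 1 h := rfl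
  have hzero : twistedDiff 1 h.re = planeDiff 0 h := by
    rw [planeDiff, zero_mul, AddChar.map_zero_eq_one]
  have hweight := mul_le_mul_of_nonneg_right (sq_re_mul_norm_rpow_le h s)
    (sq_nonneg ‖toL2 ((planeDiff 1 h ^ m) (derivCLM ℂ ℂ u))‖)
  simp only [diffForm, diffEnergy, real_inner_self_eq_norm_sq, hone, hzero]
  linarith only [hweight]

lemma abs_diffForm_transport_le {u : 𝓢(ℝ, ℂ)} {M : ℝ} (hu : ∀ x, (u x).im = 0)
    (hM : ∀ x, ‖derivCLM ℂ ℂ u x‖ ≤ M) (s : ℝ) (m : ℕ) (h : ℂ) :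
    ‖diffForm 1 s (2 * m) u (u ⬝ derivCLM ℂ ℂ u) h‖ ≤ 16 ^ m * M * (diffForm 1 s m u u h +
      diffForm 1 (s - 1) m (derivCLM ℂ ℂ u) (derivCLM ℂ ℂ u) h + diffForm 0 s m u u h) := by
  have hM0 : 0 ≤ M := (norm_nonneg _).trans (hM 0)
  calc _ ≤ ‖h‖ ^ (-2 - 2 * s) *
        (16 ^ m * M * diffEnergy (Real.fourierChar (1 * h.im)) h.re m u) := by
        rw [diffForm, norm_mul, Real.norm_of_nonneg (by positivity)]
        gcongr
        exact abs_real_inner_twistedDiff_pow_transport_le hM _ _ m hu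
    _ = 16 ^ m * M *
        (‖h‖ ^ (-2 - 2 * s) * diffEnergy (Real.fourierChar (1 * h.im)) h.re m u) := by ring
    _ ≤ _ := by gcongr; exact norm_rpow_mul_diffEnergy_le s m u h

lemma exists_abs_sobolevForm_transport_le {s : ℝ} (hs : 1 < s) :
    ∃ C : ℝ, 0 < C ∧ ∀ (u : 𝓢(ℝ, ℂ)) (M : ℝ), (∀ x, (u x).im = 0) →
      (∀ x, ‖derivCLM ℂ ℂ u x‖ ≤ M) →
        |sobolevForm 1 s u (u ⬝ derivCLM ℂ ℂ u)| ≤ C * M * sobolevForm 1 s u u := by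
  obtain ⟨m, hsm⟩ := exists_nat_gt s
  have hs0 : 0 < s := by linarith
  have hs1 : 0 < s - 1 := by linarith
  have hsm1 : s - 1 < m := by linarith
  obtain ⟨C₀, hC₀, htransport⟩ :=
    exists_integral_diffForm_eq (k := 2 * m) hs0 (by push_cast; linarith)
  obtain ⟨C₁, hC₁, henergy⟩ := exists_integral_diffForm_eq hs0 hsm
  obtain ⟨C₂, hC₂, hderiv⟩ := exists_integral_diffForm_eq hs1 hsm1
  refine ⟨16 ^ m * (C₁ + C₂ * (2 * Real.pi) ^ 2 + C₁) / C₀, by positivity, fun u M hu hM => ?_⟩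
  have hM0 : 0 ≤ M := (norm_nonneg _).trans (hM 0)
  have hτ₀ : |(0 : ℝ)| ≤ 1 := abs_zero.trans_le zero_le_one
  have hτ₁ : |(1 : ℝ)| ≤ 1 := abs_one.le
  have hi₁ := integrable_diffForm hτ₁ hs0 hsm u u
  have hi₂ := integrable_diffForm hτ₁ hs1 hsm1 (derivCLM ℂ ℂ u) (derivCLM ℂ ℂ u)
  have hi₃ := integrable_diffForm hτ₀ hs0 hsm u u
  have hbound := norm_integral_le_of_norm_le (((hi₁.add hi₂).add hi₃).const_mul (16 ^ m * M))
    (.of_forall (abs_diffForm_transport_le hu hM s m))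
  rw [integral_const_mul, integral_add' (hi₁.add hi₂) hi₃, integral_add' hi₁ hi₂,
    htransport 1 hτ₁, henergy 1 hτ₁, hderiv 1 hτ₁, henergy 0 hτ₀, norm_mul,
    Real.norm_of_nonneg hC₀.le, Real.norm_eq_abs] at hbound
  rw [div_mul_eq_mul_div, div_mul_eq_mul_div, le_div_iff₀ hC₀, mul_comm]
  calc _ ≤ 16 ^ m * M * (C₁ * sobolevForm 1 s u u + C₂ * sobolevForm 1 (s - 1) (derivCLM ℂ ℂ u)
        (derivCLM ℂ ℂ u) + C₁ * sobolevForm 0 s u u) := hbound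
    _ ≤ 16 ^ m * M * (C₁ * sobolevForm 1 s u u + C₂ * ((2 * Real.pi) ^ 2 * sobolevForm 1 s u u) +
        C₁ * sobolevForm 1 s u u) := by
        gcongr
        · exact sobolevForm_derivCLM_self_le hs.le u
        · exact sobolevForm_self_le_one hτ₀ hs0.le u
    _ = _ := by ring

end Averaging

section FourierMultiplier

/-- The Fourier multiplier `p(D)`, on functions rather than Schwartz functions because `p` need not
be smooth. -/
def multiplierOp (p : ℝ → ℝ) (f : ℝ → ℂ) : ℝ → ℂ := 𝓕⁻ fun ξ => (p ξ : ℂ) * 𝓕 f ξ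

variable {p : ℝ → ℝ} {C r : ℝ}

lemma norm_symbol_mul_fourier_le (hp : ∀ ξ, |p ξ| ≤ C * jap ξ ^ r) (f : 𝓢(ℝ, ℂ)) (ξ : ℝ) :
    ‖(p ξ : ℂ) * 𝓕 f ξ‖ ≤ C * ‖𝓕 (besselPotential r f) ξ‖ := by
  rw [fourier_besselPotential, norm_mul, norm_smul, Complex.norm_real, Real.norm_eq_abs,
    Real.norm_of_nonneg (Real.rpow_nonneg (jap_pos ξ).le r), ← mul_assoc]
  gcongr
  exact hp ξ

lemma integrable_symbol_mul_fourier (hpm : Measurable p) (hp : ∀ ξ, |p ξ| ≤ C * jap ξ ^ r)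
    (f : 𝓢(ℝ, ℂ)) : Integrable fun ξ => (p ξ : ℂ) * 𝓕 f ξ :=
  ((𝓕 (besselPotential r f)).integrable.norm.const_mul C).mono'
    (hpm.complex_ofReal.aestronglyMeasurable.mul (𝓕 f).continuous.aestronglyMeasurable)
    (.of_forall (norm_symbol_mul_fourier_le hp f))

lemma norm_multiplierOp_le (hp : ∀ ξ, |p ξ| ≤ C * jap ξ ^ r) (f : 𝓢(ℝ, ℂ)) (x : ℝ) :
    ‖multiplierOp p f x‖ ≤ C * ‖(𝓕 (besselPotential r f)).toLp 1 volume‖ := by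
  rw [multiplierOp, norm_toLp_one, Real.fourierInv_eq, ← integral_const_mul]
  refine norm_integral_le_of_norm_le ((𝓕 (besselPotential r f)).integrable.norm.const_mul C)
    (.of_forall fun ξ => ?_)
  rw [Circle.norm_smul]
  exact norm_symbol_mul_fourier_le hp f ξ

lemma continuous_multiplierOp (hpm : Measurable p) (hp : ∀ ξ, |p ξ| ≤ C * jap ξ ^ r)
    (f : 𝓢(ℝ, ℂ)) : Continuous (multiplierOp p f) :=
  VectorFourier.fourierIntegral_continuous (L := -innerₗ ℝ) Real.continuous_fourierChar
    (by simp only [LinearMap.neg_apply, innerₗ_apply_apply]; fun_prop)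
    (integrable_symbol_mul_fourier hpm hp f)

lemma integrable_inner_multiplierOp (hpm : Measurable p) (hp : ∀ ξ, |p ξ| ≤ C * jap ξ ^ r)
    (f g : 𝓢(ℝ, ℂ)) : Integrable fun x => inner ℂ (f x) (multiplierOp p g x) := by
  refine (f.integrable.norm.mul_const (C * ‖(𝓕 (besselPotential r g)).toLp 1 volume‖)).mono'
    (f.continuous.inner (continuous_multiplierOp hpm hp g)).aestronglyMeasurable
    (.of_forall fun x => ?_)
  refine (norm_inner_le_norm _ _).trans ?_
  gcongr
  exact norm_multiplierOp_le hp g x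

lemma integral_inner_multiplierOp (hpm : Measurable p) (hp : ∀ ξ, |p ξ| ≤ C * jap ξ ^ r)
    (f g : 𝓢(ℝ, ℂ)) : ∫ x, inner ℂ (f x) (multiplierOp p g x) =
      ∫ ξ, inner ℂ (𝓕 f ξ) (p ξ * 𝓕 g ξ) := by
  have hparseval := VectorFourier.integral_sesq_fourierIntegral_eq_neg_flip (innerSL ℂ (E := ℂ))
    (L := innerₗ ℝ) Real.continuous_fourierChar continuous_inner
    (f.integrable (μ := volume)) (integrable_symbol_mul_fourier hpm hp g)
  have hflip : (-(innerₗ ℝ).flip : ℝ →ₗ[ℝ] ℝ →ₗ[ℝ] ℝ) = -innerₗ ℝ := by ext; simp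
  rw [hflip] at hparseval
  exact hparseval.symm

/-- The multiplier `p(D) ∂ₓ` is skew-adjoint, so dispersion does not contribute to the energy
balance. -/
lemma integral_real_inner_multiplierOp_derivCLM (hpm : Measurable p)
    (hp : ∀ ξ, |p ξ| ≤ C * jap ξ ^ r) (q : ℝ) (u : 𝓢(ℝ, ℂ)) :
    ∫ x, inner ℝ (besselPotential q u x) (multiplierOp p (derivCLM ℂ ℂ u) x) = 0 := by
  have hsymbol : ∀ ξ, inner ℂ (𝓕 (besselPotential q u) ξ) (p ξ * 𝓕 (derivCLM ℂ ℂ u) ξ) =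
      ((jap ξ ^ q * p ξ * (2 * Real.pi * ξ) * ‖𝓕 u ξ‖ ^ 2 : ℝ) : ℂ) * Complex.I := fun ξ => by
    rw [fourier_besselPotential, fourier_derivCLM, RCLike.inner_apply', Complex.real_smul,
      Complex.real_smul, map_mul, Complex.conj_ofReal]
    push_cast
    rw [← Complex.conj_mul']
    ring
  have hre := integral_re (integrable_inner_multiplierOp hpm hp (besselPotential q u)
    (derivCLM ℂ ℂ u))
  refine (hre.trans ?_)
  rw [integral_inner_multiplierOp hpm hp]
  simp only [hsymbol]
  rw [integral_mul_const, integral_complex_ofReal, RCLike.re_to_complex, Complex.re_ofReal_mul,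
    Complex.I_re, mul_zero]

end FourierMultiplier

section EnergyDerivative

open Filter Topology

lemma sobolevForm_one_eq_inner (r : ℝ) (f g : 𝓢(ℝ, ℂ)) :
    sobolevForm 1 r f g = inner ℝ (toL2 (besselPotential r f)) (toL2 (besselPotential r g)) := by
  rw [← real_inner_toL2_fourier, real_inner_toL2]
  simp only [sobolevForm, fourier_besselPotential, real_inner_smul_left, real_inner_smul_right,
    ← jap_eq_norm_planeFreq, two_mul, Real.rpow_add (jap_pos _), mul_assoc]

lemma toReal_HsNorm_sq (s : ℝ) (f : 𝓢(ℝ, ℂ)) : (HsNorm s f).toReal ^ 2 = sobolevForm 1 s f f := by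
  have hnorm : HsNorm s f = eLpNorm (𝓕 (besselPotential s f) : 𝓢(ℝ, ℂ)) 2 volume := by
    refine eLpNorm_congr_norm_ae (.of_forall fun ξ => ?_)
    rw [fourier_besselPotential, norm_smul, norm_mul, norm_norm, fourier_coe]
  rw [hnorm, ← norm_toLp, sobolevForm_one_eq_inner, real_inner_self_eq_norm_sq,
    ← norm_toL2_fourier]
  rfl

lemma two_mul_sobolevForm_one_sub_le (r : ℝ) (f g : 𝓢(ℝ, ℂ)) :
    2 * sobolevForm 1 r f g - sobolevForm 1 r f f ≤ sobolevForm 1 r g g := by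
  have hsq := norm_sub_sq_real (toL2 (besselPotential r f)) (toL2 (besselPotential r g))
  simp only [sobolevForm_one_eq_inner, real_inner_self_eq_norm_sq]
  linarith [sq_nonneg ‖toL2 (besselPotential r f) - toL2 (besselPotential r g)‖]

variable {v : ℝ → 𝓢(ℝ, ℂ)} {v' : ℝ → ℝ → ℂ} {t B : ℝ}

lemma hasDerivAt_real_inner_toL2 (f : 𝓢(ℝ, ℂ)) (hv'm : AEStronglyMeasurable (v' t))
    (hv : ∀ᶠ τ in 𝓝 t, ∀ x, HasDerivAt (fun σ => v σ x) (v' τ x) τ)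
    (hB : ∀ᶠ τ in 𝓝 t, ∀ x, ‖v' τ x‖ ≤ B) :
    HasDerivAt (fun τ => inner ℝ (toL2 f) (toL2 (v τ))) (∫ x, inner ℝ (f x) (v' t x)) t := by
  simp only [real_inner_toL2]
  refine (hasDerivAt_integral_of_dominated_loc_of_deriv_le (bound := fun x => ‖f x‖ * B)
    (F' := fun τ x => inner ℝ (f x) (v' τ x)) (hv.and hB)
    (.of_forall fun τ => (integrable_inner f (v τ)).aestronglyMeasurable) (integrable_inner f (v t))
    (f.continuous.aestronglyMeasurable.inner hv'm) (.of_forall fun x τ hτ => ?_)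
    (f.integrable.norm.mul_const B) (.of_forall fun x τ hτ => ?_)).2
  · refine (norm_inner_le_norm _ _).trans ?_
    gcongr
    exact hτ.2 x
  · exact (innerSL ℝ (f x)).hasFDerivAt.comp_hasDerivAt τ (hτ.1 x)

/-- Only weak differentiability of the curve is known; since `sobolevForm` is positive, the energy
lies above the affine functional `g ↦ 2 ⟨v t, g⟩ - ⟨v t, v t⟩` and touches it at `v t`. -/
lemma deriv_sobolevForm_one_self_eq {r E' : ℝ}
    (hE : HasDerivAt (fun τ => sobolevForm 1 r (v τ) (v τ)) E' t)
    (hv'm : AEStronglyMeasurable (v' t))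
    (hv : ∀ᶠ τ in 𝓝 t, ∀ x, HasDerivAt (fun σ => v σ x) (v' τ x) τ)
    (hB : ∀ᶠ τ in 𝓝 t, ∀ x, ‖v' τ x‖ ≤ B) :
    E' = 2 * ∫ x, inner ℝ (besselPotential (2 * r) (v t) x) (v' t x) := by
  have hlin := hasDerivAt_real_inner_toL2 (besselPotential (2 * r) (v t)) hv'm hv hB
  simp only [← sobolevForm_one_eq_inner_left] at hlin
  have hmin : IsLocalMin
      (fun τ => sobolevForm 1 r (v τ) (v τ) - 2 * sobolevForm 1 r (v t) (v τ)) t :=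
    .of_forall fun τ => by
      dsimp only
      linarith [two_mul_sobolevForm_one_sub_le r (v t) (v τ)]
  exact sub_eq_zero.1 (hmin.hasDerivAt_eq_zero (hE.sub (hlin.const_mul 2)))

end EnergyDerivative

section WhithamEnergy

open Filter Topology

/-- The flux term `p(D) u' + ε u u'` of a Whitham-type equation, so that `∂ₜ u = -flux`. -/
def whithamFlux (p : ℝ → ℝ) (ε : ℝ) (u : 𝓢(ℝ, ℂ)) (x : ℝ) : ℂ :=
  multiplierOp p (derivCLM ℂ ℂ u) x + ε • (u ⬝ derivCLM ℂ ℂ u) x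

variable {p : ℝ → ℝ} {C r : ℝ}

lemma continuous_whithamFlux (hpm : Measurable p) (hp : ∀ ξ, |p ξ| ≤ C * jap ξ ^ r) (ε : ℝ)
    (u : 𝓢(ℝ, ℂ)) : Continuous (whithamFlux p ε u) :=
  (continuous_multiplierOp hpm hp _).add ((u ⬝ derivCLM ℂ ℂ u).continuous.const_smul ε)

lemma exists_continuous_norm_whithamFlux_le (hp : ∀ ξ, |p ξ| ≤ C * jap ξ ^ r) (ε : ℝ) :
    ∃ b : 𝓢(ℝ, ℂ) → ℝ, Continuous b ∧ ∀ u x, ‖whithamFlux p ε u x‖ ≤ b u := by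
  let sup : 𝓢(ℝ, ℂ) → ℝ := fun f => ‖toBoundedContinuousFunctionCLM ℂ ℝ ℂ f‖
  have hsup : Continuous sup := (toBoundedContinuousFunctionCLM ℂ ℝ ℂ).continuous.norm
  have hle : ∀ (f : 𝓢(ℝ, ℂ)) x, ‖f x‖ ≤ sup f := fun f x =>
    (toBoundedContinuousFunctionCLM ℂ ℝ ℂ f).norm_coe_le_norm x
  have hderiv : Continuous fun u : 𝓢(ℝ, ℂ) => derivCLM ℂ ℂ u := (derivCLM ℂ ℂ).continuous
  have hfourier : Continuous fun u : 𝓢(ℝ, ℂ) => 𝓕 (besselPotential r (derivCLM ℂ ℂ u)) :=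
    (FourierTransform.fourierCLM ℂ 𝓢(ℝ, ℂ)).continuous.comp
      ((besselPotential r).continuous.comp hderiv)
  refine ⟨fun u => C * ‖(𝓕 (besselPotential r (derivCLM ℂ ℂ u))).toLp 1 volume‖ +
    |ε| * (sup u * sup (derivCLM ℂ ℂ u)), ?_, fun u x => ?_⟩
  · exact (continuous_const.mul (continuous_toLp.comp hfourier).norm).add
      (continuous_const.mul (hsup.mul (hsup.comp hderiv)))
  · refine (norm_add_le _ _).trans (add_le_add (norm_multiplierOp_le hp _ x) ?_)
    rw [norm_smul, Real.norm_eq_abs, pairing_apply_apply, ContinuousLinearMap.mul_apply', norm_mul]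
    gcongr <;> exact hle _ x

lemma integral_real_inner_whithamFlux (hpm : Measurable p) (hp : ∀ ξ, |p ξ| ≤ C * jap ξ ^ r)
    (ε s : ℝ) (u : 𝓢(ℝ, ℂ)) :
    ∫ x, inner ℝ (besselPotential (2 * s) u x) (whithamFlux p ε u x) =
      ε * sobolevForm 1 s u (u ⬝ derivCLM ℂ ℂ u) := by
  have hdispersive : Integrable fun x =>
      inner ℝ (besselPotential (2 * s) u x) (multiplierOp p (derivCLM ℂ ℂ u) x) :=
    (integrable_inner_multiplierOp hpm hp (besselPotential (2 * s) u) (derivCLM ℂ ℂ u)).re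
  simp only [whithamFlux, inner_add_right, real_inner_smul_right]
  rw [integral_add hdispersive ((integrable_inner _ _).const_mul ε),
    integral_real_inner_multiplierOp_derivCLM hpm hp, zero_add, integral_const_mul,
    sobolevForm_one_eq_inner_left, real_inner_toL2]

lemma deriv_sobolevForm_whitham_eq (hpm : Measurable p) (hp : ∀ ξ, |p ξ| ≤ C * jap ξ ^ r)
    {ε s t E' : ℝ} {u : ℝ → 𝓢(ℝ, ℂ)} (hcont : ContinuousAt u t)
    (hsol : ∀ᶠ τ in 𝓝 t, ∀ x, HasDerivAt (fun σ => u σ x) (-whithamFlux p ε (u τ) x) τ)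
    (hE : HasDerivAt (fun τ => sobolevForm 1 s (u τ) (u τ)) E' t) :
    E' = -(2 * ε * sobolevForm 1 s (u t) (u t ⬝ derivCLM ℂ ℂ (u t))) := by
  obtain ⟨b, hb, hflux⟩ := exists_continuous_norm_whithamFlux_le hp ε
  have hlocal : ∀ᶠ τ in 𝓝 t, b (u τ) < b (u t) + 1 :=
    (hb.continuousAt.comp hcont).eventually_lt continuousAt_const (lt_add_one _)
  rw [deriv_sobolevForm_one_self_eq hE
    (continuous_whithamFlux hpm hp ε (u t)).neg.aestronglyMeasurable hsol
    (hlocal.mono fun τ hτ x => (norm_neg _).trans_le ((hflux (u τ) x).trans hτ.le))]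
  simp only [inner_neg_right, integral_neg, integral_real_inner_whithamFlux hpm hp]
  ring

/-- The embedding of real into complex Schwartz functions. -/
def complexify : 𝓢(ℝ, ℝ) →L[ℝ] 𝓢(ℝ, ℂ) := postcompCLM Complex.ofRealCLM

lemma complexify_apply (f : 𝓢(ℝ, ℝ)) (x : ℝ) : complexify f x = f x := by simp [complexify]

lemma cc_eq_complexify (f : 𝓢(ℝ, ℝ)) : cc f = complexify f :=
  funext fun x => (complexify_apply f x).symm

lemma derivCLM_complexify_apply (f : 𝓢(ℝ, ℝ)) (x : ℝ) :
    derivCLM ℂ ℂ (complexify f) x = ((deriv f x : ℝ) : ℂ) := by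
  rw [derivCLM_apply, ← cc_eq_complexify]
  exact (f.hasDerivAt x).ofReal_comp.deriv

lemma whithamFlux_complexify (p : ℝ → ℝ) (ε : ℝ) (f : 𝓢(ℝ, ℝ)) (x : ℝ) :
    whithamFlux p ε (complexify f) x = multiplierOp p (cc (deriv f)) x +
      (ε / 2 : ℂ) * ((deriv (fun y => f y ^ 2) x : ℝ) : ℂ) := by
  have hcc : cc (deriv f) = derivCLM ℂ ℂ (complexify f) :=
    funext fun y => (derivCLM_complexify_apply f y).symm
  have hsq : deriv (fun y => f y ^ 2) x = 2 * f x * deriv f x :=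
    ((f.hasDerivAt x).pow 2).deriv.trans (by simp)
  rw [whithamFlux, hcc, hsq, pairing_apply_apply, ContinuousLinearMap.mul_apply',
    complexify_apply, derivCLM_complexify_apply, Complex.real_smul]
  push_cast
  ring

lemma norm_derivCLM_complexify_le (f : 𝓢(ℝ, ℝ)) (x : ℝ) :
    ‖derivCLM ℂ ℂ (complexify f) x‖ ≤ (eLpNorm (deriv f) ⊤ volume).toReal := by
  have hcoe : ⇑(derivCLM ℝ ℝ f) = deriv f := funext fun y => derivCLM_apply ℝ f y
  have hderiv : Continuous (deriv f) := hcoe ▸ (derivCLM ℝ ℝ f).continuous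
  have hfin : eLpNorm (deriv f) ⊤ volume ≠ ⊤ :=
    hcoe ▸ ((derivCLM ℝ ℝ f).memLp_top volume).eLpNorm_ne_top
  have hae : ∀ᵐ y, ‖deriv f y‖ ≤ (eLpNorm (deriv f) ⊤ volume).toReal := by
    filter_upwards [ae_le_eLpNormEssSup (f := deriv f) (μ := volume)] with y hy
    simpa using ENNReal.toReal_mono hfin hy
  rw [derivCLM_complexify_apply, Complex.norm_real]
  exact (isClosed_le hderiv.norm continuous_const).closure_subset (Measure.dense_of_ae hae x)

theorem whitham_energy_estimate_general {s : ℝ} (hs : 1 < s) :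
    ∃ c : ℝ, 0 < c ∧
      ∀ p : ℝ → ℝ, Measurable p → (∃ C r : ℝ, ∀ ξ, |p ξ| ≤ C * jap ξ ^ r) →
        ∀ (ε t : ℝ) (η : ℝ → 𝓢(ℝ, ℝ)), ContinuousAt η t →
          (∀ᶠ τ in 𝓝 t, ∀ x : ℝ,
            HasDerivAt (fun σ => ((η σ x : ℝ) : ℂ))
              (-(multiplierOp p (cc (deriv (η τ))) x +
                  (ε / 2 : ℂ) * ((deriv (fun y => (η τ y) ^ 2) x : ℝ) : ℂ))) τ) →
          ∀ E' : ℝ, HasDerivAt (fun τ => (HsNorm s (cc (η τ))).toReal ^ 2) E' t →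
            |E'| ≤ c * |ε| * (eLpNorm (deriv (η t)) ⊤ volume).toReal *
              (HsNorm s (cc (η t))).toReal ^ 2 := by
  obtain ⟨C, hC, htransport⟩ := exists_abs_sobolevForm_transport_le hs
  refine ⟨2 * C, by positivity, fun p hpm ⟨_, _, hp⟩ ε t η hcont hsol E' hE => ?_⟩
  have hcont' : ContinuousAt (fun τ => complexify (η τ)) t :=
    complexify.continuous.continuousAt.comp hcont
  simp only [← whithamFlux_complexify, ← complexify_apply] at hsol
  simp only [cc_eq_complexify, toReal_HsNorm_sq] at hE ⊢
  rw [deriv_sobolevForm_whitham_eq hpm hp hcont' hsol hE,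
    abs_neg, abs_mul, abs_mul, abs_two]
  calc _ ≤ 2 * |ε| * (C * (eLpNorm (deriv (η t)) ⊤ volume).toReal *
        sobolevForm 1 s (complexify (η t)) (complexify (η t))) := by
        gcongr
        exact htransport _ _ (fun x => by rw [complexify_apply, Complex.ofReal_im])
          (norm_derivCLM_complexify_le (η t))
    _ = _ := by ring

end WhithamEnergy

section WhithamSymbol

lemma tanh_le_self {y : ℝ} (hy : 0 ≤ y) : Real.tanh y ≤ y := by
  have hmvt := (convex_Icc 0 y).image_sub_le_mul_sub_of_deriv_le Real.continuous_sinh.continuousOn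
    Real.differentiable_sinh.differentiableOn (C := Real.cosh y) (fun x hx => by
      rw [interior_Icc] at hx
      rw [Real.deriv_sinh, Real.cosh_le_cosh, abs_of_pos hx.1, abs_of_nonneg hy]
      exact hx.2.le) 0 (Set.left_mem_Icc.2 hy) y (Set.right_mem_Icc.2 hy) hy
  rw [Real.sinh_zero, sub_zero, sub_zero] at hmvt
  rwa [Real.tanh_eq_sinh_div_cosh, div_le_iff₀' (Real.cosh_pos y)]

lemma sqrt_Tsymb_le_one (μ ξ : ℝ) : √(Tsymb μ ξ) ≤ 1 := by
  refine Real.sqrt_le_one.2 ?_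
  rw [Tsymb]
  split_ifs
  · exact le_rfl
  · exact div_le_one_of_le₀ (tanh_le_self (by positivity)) (by positivity)

lemma measurable_Tsymb (μ : ℝ) : Measurable (Tsymb μ) := by
  have htanh : Measurable Real.tanh := by
    simp only [funext Real.tanh_eq_sinh_div_cosh]
    fun_prop
  exact Measurable.ite (measurableSet_singleton 0) measurable_const (by fun_prop)

end WhithamSymbol

/-- Energy estimate for the Whitham equation: for `s > 3/2`,
`ε, μ ∈ (0,1]`, there is `c = c(s)`, independent of `ε, μ, T`, such that any Schwartz-valued
`C¹`-in-time solution of `∂_t η + √T_μ(D) ∂_x η + (ε/2) ∂_x(η²) = 0` on `[0,T]` satisfies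
`(d/dt)‖η(t)‖_{H^s}² ≤ c ε ‖∂_x η(t)‖_{L^∞} ‖η(t)‖_{H^s}²` for `t ∈ (0,T)`. -/
theorem whitham_energy_estimate (s : ℝ) (hs : 3 / 2 < s) :
    ∃ c : ℝ, 0 < c ∧
      ∀ ε μ : ℝ, 0 < ε → ε ≤ 1 → 0 < μ → μ ≤ 1 →
        ∀ T : ℝ, 0 < T →
          ∀ η : ℝ → 𝓢(ℝ, ℝ), Continuous η →
            -- the Whitham equation `∂_t η = −(√T_μ(D) ∂_x η + (ε/2) ∂_x(η²))` on `[0,T]`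
            (∀ t ∈ Set.Icc (0 : ℝ) T, ∀ x : ℝ,
              HasDerivAt (fun τ => ((η τ x : ℝ) : ℂ))
                (-(sqrtTmul μ (cc (deriv (⇑(η t)))) x +
                    (ε / 2 : ℂ) * ((deriv (fun y => (η t y) ^ 2) x : ℝ) : ℂ))) t) →
            ∀ t ∈ Set.Ioo (0 : ℝ) T, ∀ E' : ℝ,
              HasDerivAt (fun τ => ((HsNorm s (cc ⇑(η τ))).toReal) ^ 2) E' t →
                E' ≤ c * ε * (eLpNorm (deriv (⇑(η t))) ⊤ volume).toReal *
                      ((HsNorm s (cc ⇑(η t))).toReal) ^ 2 := by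
  obtain ⟨c, hc, hest⟩ := whitham_energy_estimate_general (by linarith : 1 < s)
  refine ⟨c, hc, fun ε μ hε _ _ _ T _ η hη hsol t ht E' hE => (le_abs_self E').trans ?_⟩
  have hsymbol : ∀ ξ, |√(Tsymb μ ξ)| ≤ 1 * jap ξ ^ (0 : ℝ) := fun ξ => by
    rw [abs_of_nonneg (Real.sqrt_nonneg _), Real.rpow_zero, one_mul]
    exact sqrt_Tsymb_le_one μ ξ
  simpa only [abs_of_pos hε] using hest _ (measurable_Tsymb μ).sqrt ⟨1, 0, hsymbol⟩ ε t η
    hη.continuousAt (Filter.mem_of_superset (Icc_mem_nhds ht.1 ht.2) hsol) E' hE
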